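/- For every γ > 0 there exist real numbers d₀(γ) and d₁(γ) such that for every t > γ the limit C(γ,t) = lim_{n→∞} Z_n / (F^{n²} G^n) exists, is positive, and satisfies ln C(γ,t) = d₁(γ) t + d₀(γ); that is, for fixed γ the function t ↦ ln C(γ,t) is affine on (γ,∞). -/

import Mathlib

open Real Filter Finset

/-- `φ(s) = sinh(2γ)/(sinh(s+γ) sinh(s-γ))`. -/
noncomputable def phiSV (γ s : ℝ) : ℝ :=
  Real.sinh (2 * γ) / (Real.sinh (s + γ) * Real.sinh (s - γ))

/-- The Hankel determinant `τ_n = det(φ^{(j+k-2)}(t))_{1 ≤ j,k ≤ n}`. -/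
noncomputable def tauSV (n : ℕ) (t γ : ℝ) : ℝ :=
  Matrix.det (Matrix.of fun j k : Fin n => iteratedDeriv ((j : ℕ) + (k : ℕ)) (phiSV γ) t)

/-- Izergin's formula for the partition function of the six-vertex model with DWBC,
ferroelectric parametrization. -/
noncomputable def ZSV (n : ℕ) (t γ : ℝ) : ℝ :=
  (Real.sinh (t - γ) * Real.sinh (t + γ)) ^ (n ^ 2) * tauSV n t γ /
    (∏ j ∈ Finset.range n, (Nat.factorial j : ℝ)) ^ 2

/-!
For `t > γ` the function `φ` is the moment series `∑ k, w k * exp (-2 * (k + 1) * t)` of a discrete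
measure on `ℕ`, so `τ_n` is a Gram determinant of monomials for the weight
`2 * q ^ (k + 1) * (1 - ρ ^ (k + 1))`, where `q = exp (2 * (γ - t))` and `ρ = exp (-4 * γ)`.
Replacing monomials by the Meixner polynomials orthogonal for `q ^ k` turns `Z_n / (F ^ n² * G ^ n)`
into the `n`-th principal minor of `U * diagonal (1 - ρ ^ (k + 1)) * Uᵀ`, where the matrix `U` of
Meixner functions is orthogonal on `ℓ²`. Since `U` is orthogonal one expects the minors to tend to
`det (diagonal (1 - ρ ^ (k + 1))) = ∏ k, (1 - ρ ^ (k + 1))`, which does not involve `t`.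

To prove this without Fredholm determinants, put `B = U * diagonal (ρ ^ ((k + 1) / 2))`, a
contraction. The determinant of `1 - A * Aᵀ` for the `n × k` corner `A` of `B` decreases in both
`n` and `k`, so its two iterated limits agree. As `k → ∞` it tends to the `n`-th minor above, and as
`n → ∞` to the minor `∏ l < k, (1 - ρ ^ (l + 1))` of `1 - Bᵀ * B`, because `Uᵀ * U = 1`.
-/

open Matrix Polynomial Topology

section DoubleSequence

variable {ι κ α : Type*} [Preorder ι] [IsDirectedOrder ι] [Preorder κ] [IsDirectedOrder κ]
  [Nonempty κ] [TopologicalSpace α] [LinearOrder α] [OrderTopology α]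

lemma tendsto_iterated_limit_of_antitone {f : ι → κ → α} {r : ι → α} {c : κ → α}
    {a : α} (hf : ∀ i, Antitone (f i)) (hf' : ∀ k, Antitone fun i => f i k)
    (hr : ∀ i, Tendsto (f i) atTop (𝓝 (r i)))
    (hc : ∀ k, Tendsto (fun i => f i k) atTop (𝓝 (c k)))
    (ha : Tendsto c atTop (𝓝 a)) : Tendsto r atTop (𝓝 a) := by
  have lower (i : ι) : a ≤ r i :=
    le_of_tendsto_of_tendsto' ha (hr i) fun k => (hf' k).le_of_tendsto (hc k) i
  have upper (i : ι) (k : κ) : r i ≤ f i k := (hf i).le_of_tendsto (hr i) k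
  refine tendsto_order.2 ⟨fun b hb => .of_forall fun i => hb.trans_le (lower i), fun b hb => ?_⟩
  obtain ⟨k, hk⟩ := ((tendsto_order.1 ha).2 b hb).exists
  filter_upwards [(tendsto_order.1 (hc k)).2 b hk] with i hi
  exact (upper i k).trans_lt hi

end DoubleSequence

section PosSemidef

open scoped ComplexOrder

variable {𝕜 m n : Type*} [RCLike 𝕜] [Fintype m] [Fintype n] [DecidableEq m] [DecidableEq n]

lemma det_le_det_add_vecMulVec_star {A : Matrix m m 𝕜} (hA : A.PosSemidef) (v : m → 𝕜) :
    A.det ≤ (A + vecMulVec v (star v)).det := by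
  obtain hdet | hdet := eq_or_ne A.det 0
  · exact hdet.trans_le (hA.add (posSemidef_vecMulVec_self_star v)).det_nonneg
  · rw [vecMulVec_eq Unit, det_add_replicateCol_mul_replicateRow hdet.isUnit, Matrix.mul_assoc,
      ← replicateCol_mulVec, det_unique (n := Unit), Matrix.add_apply, one_apply_eq,
      replicateRow_mul_replicateCol_apply]
    exact le_mul_of_one_le_right hA.det_nonneg
      (le_add_of_nonneg_right (hA.inv.dotProduct_mulVec_nonneg v))

lemma posSemidef_one_sub_mul_conjTranspose_comm (A : Matrix m n 𝕜) :
    (1 - A * Aᴴ).PosSemidef ↔ (1 - Aᴴ * A).PosSemidef := by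
  let _ : Invertible (1 : Matrix m m 𝕜) := invertibleOne
  let _ : Invertible (1 : Matrix n n 𝕜) := invertibleOne
  have h₁ := PosDef.fromBlocks₁₁ A 1 (.one (R := 𝕜))
  have h₂ := PosDef.fromBlocks₂₂ 1 A (.one (R := 𝕜))
  simp only [inv_one, Matrix.mul_one] at h₁ h₂
  exact h₂.symm.trans h₁

end PosSemidef

section Contraction

/-- The top left `n × k` corner of an infinite matrix. -/
def corner (B : Matrix ℕ ℕ ℝ) (n k : ℕ) : Matrix (Fin n) (Fin k) ℝ :=
  B.submatrix (↑) (↑)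

/-- The operator on `ℓ²` with matrix `B` has norm at most one, expressed through the finite corners
of `B`. -/
def IsContraction (B : Matrix ℕ ℕ ℝ) : Prop :=
  ∀ n k, (1 - corner B n k * (corner B n k)ᵀ).PosSemidef

/-- `B * Bᵀ = G` for infinite matrices, all entries of the product being convergent series. -/
def HasGram (B G : Matrix ℕ ℕ ℝ) : Prop :=
  ∀ i j, HasSum (fun k => B i k * B j k) (G i j)

/-- The defect determinant `det (1 - A * Aᵀ)` of the `n × k` corner `A` of `B`. For a contraction
it is nonincreasing in both `n` and `k`, so its iterated limits can be exchanged. -/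
noncomputable def defectDet (B : Matrix ℕ ℕ ℝ) (n k : ℕ) : ℝ :=
  (1 - corner B n k * (corner B n k)ᵀ).det

variable {B G H : Matrix ℕ ℕ ℝ}

lemma IsContraction.transpose (hB : IsContraction B) : IsContraction Bᵀ := fun n k =>
  (posSemidef_one_sub_mul_conjTranspose_comm (corner B k n)).1 (hB k n)

lemma defectDet_transpose (B : Matrix ℕ ℕ ℝ) (n k : ℕ) : defectDet Bᵀ n k = defectDet B k n :=
  (det_one_sub_mul_comm (corner B k n) (corner B k n)ᵀ).symm

lemma corner_succ_mul_transpose (B : Matrix ℕ ℕ ℝ) (n k : ℕ) :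
    corner B n (k + 1) * (corner B n (k + 1))ᵀ =
      corner B n k * (corner B n k)ᵀ +
        vecMulVec (fun i : Fin n => B i k) fun i : Fin n => B i k := by
  ext i j
  simp [corner, Matrix.mul_apply, Fin.sum_univ_castSucc, vecMulVec_apply]

lemma IsContraction.antitone_defectDet (hB : IsContraction B) (n : ℕ) : Antitone (defectDet B n) :=
  antitone_nat_of_succ_le fun k => by
    have h := det_le_det_add_vecMulVec_star (hB n (k + 1)) fun i : Fin n => B i k
    rwa [star_trivial, corner_succ_mul_transpose, ← sub_sub, sub_add_cancel, sub_sub,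
      ← corner_succ_mul_transpose] at h

lemma HasGram.tendsto_defectDet (hG : HasGram B (1 - G)) (n : ℕ) :
    Tendsto (defectDet B n) atTop (𝓝 (corner G n n).det) := by
  have hlim : Tendsto (fun k => 1 - corner B n k * (corner B n k)ᵀ) atTop (𝓝 (corner G n n)) := by
    refine tendsto_pi_nhds.2 fun i => tendsto_pi_nhds.2 fun j => ?_
    have h := (hG i j).tendsto_sum_nat.const_sub ((1 : Matrix ℕ ℕ ℝ) i j)
    simpa [corner, Matrix.mul_apply, sum_range, Matrix.one_apply, Fin.ext_iff] using h
  exact (Continuous.matrix_det continuous_id).continuousAt.tendsto.comp hlim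

theorem IsContraction.tendsto_det_corner (hB : IsContraction B) (hG : HasGram B (1 - G))
    (hH : HasGram Bᵀ (1 - H)) {a : ℝ}
    (ha : Tendsto (fun k => (corner H k k).det) atTop (𝓝 a)) :
    Tendsto (fun n => (corner G n n).det) atTop (𝓝 a) := by
  refine tendsto_iterated_limit_of_antitone hB.antitone_defectDet (fun k => ?_)
    hG.tendsto_defectDet (fun k => ?_) ha
  · exact (funext (defectDet_transpose B k)) ▸ hB.transpose.antitone_defectDet k
  · exact (hH.tendsto_defectDet k).congr (defectDet_transpose B k)

variable {u : Matrix ℕ ℕ ℝ}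

lemma HasGram.hasSum_sq_of_one (hu : HasGram u 1) {n : ℕ} (x : Fin n → ℝ) :
    HasSum (fun k => (∑ i : Fin n, u i k * x i) ^ 2) (x ⬝ᵥ x) := by
  have h : HasSum (fun k => ∑ i : Fin n, ∑ j : Fin n, x i * x j * (u i k * u j k))
      (∑ i : Fin n, ∑ j : Fin n, x i * x j * (1 : Matrix ℕ ℕ ℝ) i j) :=
    hasSum_sum fun i _ => hasSum_sum fun j _ => (hu i j).mul_left _
  convert h using 1
  · ext k
    rw [sq, sum_mul_sum]
    exact sum_congr rfl fun i _ => sum_congr rfl fun j _ => by ring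
  · simp [Matrix.one_apply, ← Fin.ext_iff, dotProduct]

lemma HasGram.isContraction_of_one (hu : HasGram u 1) : IsContraction u := fun n k => by
  refine .of_dotProduct_mulVec_nonneg
    (isHermitian_one.sub (isHermitian_mul_conjTranspose_self _)) fun x => ?_
  have bessel := sum_le_hasSum (range k) (fun l _ => sq_nonneg _) (hu.hasSum_sq_of_one x)
  have norm_sq : x ⬝ᵥ (corner u n k * (corner u n k)ᵀ) *ᵥ x
      = ∑ l ∈ range k, (∑ i : Fin n, u i l * x i) ^ 2 := by
    rw [← mulVec_mulVec, dotProduct_mulVec, ← mulVec_transpose]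
    simp [dotProduct, mulVec, corner, sum_range, sq]
  rw [star_trivial, sub_mulVec, one_mulVec, dotProduct_sub, norm_sq]
  exact sub_nonneg.2 bessel

lemma IsContraction.scale_columns (hu : IsContraction u) {a : ℕ → ℝ} (ha : ∀ k, a k ^ 2 ≤ 1) :
    IsContraction (.of fun i k => u i k * a k) := fun n k => by
  let b : Fin k → ℝ := fun l => a l
  let U := corner u n k
  have hcorner : corner (.of fun i k => u i k * a k) n k = U * diagonal b := by
    ext i j
    simp [corner, U, b]
  have hb : (diagonal fun l => 1 - b l ^ 2).PosSemidef :=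
    .diagonal fun l => sub_nonneg.2 (ha l)
  have hsplit : 1 - U * diagonal b * (U * diagonal b)ᵀ =
      (1 - U * Uᵀ) + U * (diagonal fun l => 1 - b l ^ 2) * Uᴴ := by
    have hsub : (diagonal fun l => 1 - b l ^ 2) = 1 - diagonal b * diagonal b := by
      simp only [diagonal_mul_diagonal, sq, ← diagonal_one, diagonal_sub]
    rw [hsub, Matrix.mul_sub, Matrix.sub_mul, conjTranspose_eq_transpose_of_trivial,
      transpose_mul, diagonal_transpose, Matrix.mul_one, sub_add_sub_cancel]
    simp only [Matrix.mul_assoc]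
  rw [hcorner, hsplit]
  exact (hu n k).add (hb.mul_mul_conjTranspose_same U)

end Contraction

section GramDet

/-- The `n`-th leading principal minor of the infinite matrix `u * diagonal w * uᵀ`. -/
noncomputable def gramDet (w : ℕ → ℝ) (u : Matrix ℕ ℕ ℝ) (n : ℕ) : ℝ :=
  (Matrix.of fun i j : Fin n => ∑' k, w k * (u i k * u j k)).det

variable {w : ℕ → ℝ} {u : Matrix ℕ ℕ ℝ}

theorem tendsto_gramDet_of_orthogonal (hu : HasGram u 1) (hu' : HasGram uᵀ 1)
    (hw₀ : ∀ k, 0 ≤ w k) (hw₁ : ∀ k, w k ≤ 1) {a : ℝ}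
    (ha : Tendsto (fun n => ∏ k ∈ range n, w k) atTop (𝓝 a)) :
    Tendsto (gramDet w u) atTop (𝓝 a) := by
  have hsq (k : ℕ) : √(1 - w k) ^ 2 = 1 - w k := sq_sqrt (sub_nonneg.2 (hw₁ k))
  let B : Matrix ℕ ℕ ℝ := .of fun i k => u i k * √(1 - w k)
  have hB : IsContraction B := hu.isContraction_of_one.scale_columns fun k => by
    linarith [hsq k, hw₀ k]
  have hsum (i j : ℕ) : Summable fun k => w k * (u i k * u j k) :=
    .of_norm_bounded (hu i j).summable.norm fun k => by
      rw [norm_mul, norm_of_nonneg (hw₀ k)]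
      exact mul_le_of_le_one_left (norm_nonneg _) (hw₁ k)
  have hrows : HasGram B (1 - .of fun i j => ∑' k, w k * (u i k * u j k)) := fun i j => by
    refine ((hu i j).sub (hsum i j).hasSum).congr_fun fun k => ?_
    change u i k * √(1 - w k) * (u j k * √(1 - w k)) = _
    linear_combination (u i k * u j k) * hsq k
  have hdefect (k l : ℕ) :
      √(1 - w k) * √(1 - w l) * (1 : Matrix ℕ ℕ ℝ) k l = (1 - diagonal w) k l := by
    obtain rfl | hkl := eq_or_ne k l
    · simp [← sq, hsq]
    · simp [hkl]
  have hcols : HasGram Bᵀ (1 - diagonal w) := fun k l => by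
    rw [← hdefect]
    refine ((hu' k l).mul_left _).congr_fun fun i => ?_
    change u i k * √(1 - w k) * (u i l * √(1 - w l)) = _ * (u i k * u i l)
    ring
  refine hB.tendsto_det_corner hrows hcols (ha.congr fun n => ?_)
  rw [corner, submatrix_diagonal _ _ Fin.val_injective, det_diagonal, prod_range]
  rfl

lemma gramDet_const_mul (c : ℝ) (w : ℕ → ℝ) (u : Matrix ℕ ℕ ℝ) (n : ℕ) :
    gramDet (fun k => c * w k) u n = c ^ n * gramDet w u n := by
  simp only [gramDet, mul_assoc, tsum_mul_left]
  exact (det_smul _ _).trans (by rw [Fintype.card_fin]; rfl)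

lemma gramDet_eval {x : ℕ → ℝ} (hw : ∀ m, Summable fun k => w k * x k ^ m) {p : ℕ → ℝ[X]}
    (hp : ∀ i, (p i).natDegree ≤ i) (n : ℕ) :
    gramDet w (.of fun i k => (p i).eval (x k)) n =
      (∏ i ∈ range n, (p i).coeff i) ^ 2 * gramDet w (.of fun i k => x k ^ i) n := by
  let A : Matrix (Fin n) (Fin n) ℝ := .of fun a i => (p i).coeff a
  let M : Matrix (Fin n) (Fin n) ℝ := .of fun i j => ∑' k, w k * (x k ^ (i : ℕ) * x k ^ (j : ℕ))
  have hA : A.det = ∏ i ∈ range n, (p i).coeff i := by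
    rw [det_of_isUpperTriangular
      (matrixOfPolynomials_blockTriangular (fun i : Fin n => p i) fun i => hp i), prod_range]
    rfl
  have heval (i : Fin n) (y : ℝ) : (p i).eval y = ∑ a, A a i * y ^ (a : ℕ) := by
    rw [eval_eq_sum_range' ((hp i).trans_lt i.2), sum_range]
    rfl
  have hM : (Matrix.of fun i j : Fin n => ∑' k, w k * ((p i).eval (x k) * (p j).eval (x k))) =
      Aᵀ * M * A := by
    ext i j
    have hterm (k : ℕ) : w k * ((p i).eval (x k) * (p j).eval (x k)) =
        ∑ b : Fin n, ∑ a : Fin n, A a i * (w k * (x k ^ (a : ℕ) * x k ^ (b : ℕ))) * A b j := by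
      rw [heval, heval, sum_mul_sum, sum_comm, mul_sum]
      refine sum_congr rfl fun b _ => ?_
      rw [mul_sum]
      exact sum_congr rfl fun a _ => by ring
    have hmoment (a b : Fin n) : Summable fun k => w k * (x k ^ (a : ℕ) * x k ^ (b : ℕ)) := by
      simpa only [← pow_add] using hw (a + b)
    have h := hasSum_sum fun b (_ : b ∈ (univ : Finset (Fin n))) =>
      hasSum_sum fun a (_ : a ∈ (univ : Finset (Fin n))) =>
      ((hmoment a b).hasSum.mul_left (A a i)).mul_right (A b j)
    simp only [of_apply, hterm, h.tsum_eq, Matrix.mul_apply, transpose_apply, M, sum_mul]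
  simp only [gramDet, of_apply]
  rw [hM, det_mul, det_mul, det_transpose, hA]
  ring

lemma gramDet_affine_pow {x : ℕ → ℝ} (hw : ∀ m, Summable fun k => w k * x k ^ m) (a b : ℝ)
    (n : ℕ) :
    gramDet w (.of fun i k => (a * x k + b) ^ i) n =
      (∏ i ∈ range n, a ^ i) ^ 2 * gramDet w (.of fun i k => x k ^ i) n := by
  have hlin : (C a * X + C b).natDegree ≤ 1 := natDegree_linear_le
  have h := gramDet_eval hw (p := fun i => (C a * X + C b) ^ i)
    (fun i => by simpa using natDegree_pow_le_of_le i hlin) n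
  have hcoeff (i : ℕ) : ((C a * X + C b) ^ i).coeff i = a ^ i := by
    simpa using coeff_pow_of_natDegree_le (m := i) hlin
  simpa [hcoeff] using h

end GramDet

section Meixner

/-- The Meixner polynomial `M_j(x; 1, q) = ₂F₁(-j, -x; 1; 1 - q⁻¹)`; the parameter `β` is `1`. -/
noncomputable def meixnerPolynomial (q : ℝ) (j : ℕ) : ℝ[X] :=
  ∑ i ∈ range (j + 1), C (j.choose i * (1 - q⁻¹) ^ i / i.factorial) * descPochhammer ℝ i

/-- The value of the `j`-th Meixner polynomial at `k`, on whose symmetry in `j` and `k`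
the completeness of the Meixner functions rests. -/
noncomputable def meixner (q : ℝ) (j k : ℕ) : ℝ :=
  (meixnerPolynomial q j).eval (k : ℝ)

variable (q : ℝ)

lemma natDegree_meixnerPolynomial_le (j : ℕ) : (meixnerPolynomial q j).natDegree ≤ j :=
  natDegree_sum_le_of_forall_le _ _ fun i hi => by
    grw [natDegree_C_mul_le, descPochhammer_natDegree]
    exact mem_range_succ_iff.1 hi

lemma coeff_meixnerPolynomial (j : ℕ) :
    (meixnerPolynomial q j).coeff j = (1 - q⁻¹) ^ j / j.factorial := by
  have hlower (i : ℕ) (hi : i ∈ range j) :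
      (C (j.choose i * (1 - q⁻¹) ^ i / i.factorial) * descPochhammer ℝ i).coeff j = 0 := by
    rw [coeff_C_mul, coeff_eq_zero_of_natDegree_lt, mul_zero]
    rwa [descPochhammer_natDegree, ← mem_range]
  have hmonic : (descPochhammer ℝ j).coeff j = 1 := by
    simpa only [descPochhammer_natDegree] using (monic_descPochhammer ℝ j).coeff_natDegree
  rw [meixnerPolynomial, finsetSum_coeff, sum_range_succ, sum_eq_zero hlower, zero_add, coeff_C_mul,
    hmonic, Nat.choose_self, Nat.cast_one, one_mul, mul_one]

lemma meixner_eq_sum {j N : ℕ} (hj : j ≤ N) (k : ℕ) :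
    meixner q j k = ∑ i ∈ range (N + 1), (j.choose i : ℝ) * k.choose i * (1 - q⁻¹) ^ i := by
  have hterm (i : ℕ) :
      (C (j.choose i * (1 - q⁻¹) ^ i / i.factorial) * descPochhammer ℝ i).eval (k : ℝ) =
        j.choose i * k.choose i * (1 - q⁻¹) ^ i := by
    rw [eval_mul, eval_C, descPochhammer_eval_eq_descFactorial,
      Nat.descFactorial_eq_factorial_mul_choose, Nat.cast_mul]
    field_simp
  rw [meixner, meixnerPolynomial, eval_finsetSum, sum_congr rfl fun i _ => hterm i]
  refine sum_subset (range_mono (by lia)) fun i _ hi => ?_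
  rw [Nat.choose_eq_zero_of_lt (by simpa using hi)]
  simp

lemma meixner_comm (j k : ℕ) : meixner q j k = meixner q k j := by
  rw [meixner_eq_sum q (le_max_left j k), meixner_eq_sum q (le_max_right j k)]
  exact sum_congr rfl fun i _ => by ring

@[simp]
lemma meixner_zero_left (k : ℕ) : meixner q 0 k = 1 := by
  simp [meixner_eq_sum q le_rfl]

@[simp]
lemma meixner_zero_right (j : ℕ) : meixner q j 0 = 1 := by
  rw [meixner_comm, meixner_zero_left]

lemma meixner_succ_sub_meixner (j k : ℕ) :
    meixner q (j + 1) (k + 1) - meixner q j (k + 1) =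
      meixner q (j + 1) k - q⁻¹ * meixner q j k := by
  have hmixed : meixner q (j + 1) (k + 1) - meixner q j (k + 1) - meixner q (j + 1) k +
      meixner q j k = (1 - q⁻¹) * meixner q j k := by
    nth_rw 5 [meixner_eq_sum q le_rfl]
    simp only [meixner_eq_sum q (le_refl (j + 1)), meixner_eq_sum q (Nat.le_add_right j 1)]
    rw [← sum_sub_distrib, ← sum_sub_distrib, ← sum_add_distrib, sum_range_succ', mul_sum]
    simp only [Nat.choose_succ_succ, Nat.choose_zero_right, Nat.cast_add, sub_self, zero_sub,
      neg_add_cancel, add_zero]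
    exact sum_congr rfl fun i _ => by ring
  linear_combination hmixed

variable {q}

lemma summable_geometric_mul_eval (hq : ‖q‖ < 1) (p : ℝ[X]) :
    Summable fun k : ℕ => q ^ k * p.eval (k : ℝ) := by
  simp only [eval_eq_sum_range, mul_sum]
  refine summable_sum fun m _ => ?_
  exact ((summable_pow_mul_geometric_of_norm_lt_one m hq).mul_left (p.coeff m)).congr
    fun k => by ring

lemma hasSum_sub_succ {g : ℕ → ℝ} (hg : Summable g) :
    HasSum (fun k => g k - g (k + 1)) (g 0) := by
  simpa using hg.hasSum.sub ((hasSum_nat_add_iff' 1).2 hg.hasSum)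

lemma hasSum_meixner_succ (hq₀ : q ≠ 0) (hq : ‖q‖ < 1) (j : ℕ) :
    HasSum (fun k => q ^ k * meixner q (j + 1) k) 0 := by
  have hs (i : ℕ) : Summable fun k => q ^ k * meixner q i k :=
    summable_geometric_mul_eval hq (meixnerPolynomial q i)
  have hq₁ : 1 - q ≠ 0 := sub_ne_zero.2 fun h => by simp [← h] at hq
  have h := (hasSum_sub_succ ((hs (j + 1)).sub (hs j))).mul_left (1 - q)⁻¹
  simp only [meixner_zero_right, sub_self, mul_zero] at h
  refine h.congr_fun fun k => ?_
  rw [← mul_sub (q ^ (k + 1)), meixner_succ_sub_meixner]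
  field_simp
  ring

lemma hasSum_meixner_mul_meixner (hq₀ : q ≠ 0) (hq : ‖q‖ < 1) (i j : ℕ) :
    HasSum (fun k => q ^ k * (meixner q i k * meixner q j k))
      (if i = j then (q ^ i * (1 - q))⁻¹ else 0) := by
  have hq₁ : 1 - q ≠ 0 := sub_ne_zero.2 fun h => by simp [← h] at hq
  induction i generalizing j with
  | zero =>
    cases j with
    | zero => simpa using hasSum_geometric_of_norm_lt_one hq
    | succ j => simpa using hasSum_meixner_succ hq₀ hq j
  | succ i ih =>
    cases j with
    | zero => simpa using hasSum_meixner_succ hq₀ hq i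
    | succ j =>
      -- Telescoping `q ^ k * (Δ i k * Δ j k)` reduces the pair `(i + 1, j + 1)` to `(i, j)`.
      let Δ (j k : ℕ) : ℝ := meixner q (j + 1) k - meixner q j k
      have hΔ : Summable fun k => q ^ k * (Δ i k * Δ j k) :=
        summable_geometric_mul_eval hq
          ((meixnerPolynomial q (i + 1) - meixnerPolynomial q i) *
            (meixnerPolynomial q (j + 1) - meixnerPolynomial q j)) |>.congr fun k => by
          simp [Δ, meixner]
      have h := ((hasSum_sub_succ hΔ).mul_left (1 - q)⁻¹).add ((ih j).mul_left q⁻¹)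
      have hvalue : (1 - q)⁻¹ * (q ^ 0 * (Δ i 0 * Δ j 0)) +
          q⁻¹ * (if i = j then (q ^ i * (1 - q))⁻¹ else 0) =
            if i + 1 = j + 1 then (q ^ (i + 1) * (1 - q))⁻¹ else 0 := by
        simp [Δ, pow_succ, mul_assoc, mul_comm]
      rw [← hvalue]
      refine h.congr_fun fun k => ?_
      simp only [Δ, meixner_succ_sub_meixner]
      field_simp
      ring

/-- The Meixner functions, normalised to an orthonormal basis of `ℓ²`, as the rows of an infinite
matrix; the parameter is `s = √q`. -/
noncomputable def meixnerFunction (s : ℝ) : Matrix ℕ ℕ ℝ :=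
  .of fun i k => √(1 - s ^ 2) * s ^ (i + k) * meixner (s ^ 2) i k

variable {s : ℝ}

lemma meixnerFunction_transpose (s : ℝ) : (meixnerFunction s)ᵀ = meixnerFunction s := by
  ext i k
  simp only [meixnerFunction, transpose_apply, of_apply]
  rw [meixner_comm, add_comm]

lemma hasGram_meixnerFunction (hs₀ : s ≠ 0) (hs : ‖s‖ < 1) : HasGram (meixnerFunction s) 1 := by
  have hsq : s ^ 2 < 1 := (sq_lt_one_iff_abs_lt_one s).2 hs
  have hpos : 0 < 1 - s ^ 2 := sub_pos.2 hsq
  have hroot : √(1 - s ^ 2) ^ 2 = 1 - s ^ 2 := sq_sqrt hpos.le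
  intro i j
  have h := (hasSum_meixner_mul_meixner (pow_ne_zero 2 hs₀) (by simpa using hsq) i j).mul_left
    ((1 - s ^ 2) * s ^ (i + j))
  have hvalue : (1 - s ^ 2) * s ^ (i + j) *
      (if i = j then ((s ^ 2) ^ i * (1 - s ^ 2))⁻¹ else 0) = (1 : Matrix ℕ ℕ ℝ) i j := by
    obtain rfl | hij := eq_or_ne i j
    · rw [if_pos rfl, one_apply_eq]
      field_simp
      ring
    · simp [hij]
  rw [← hvalue]
  refine h.congr_fun fun k => ?_
  simp only [meixnerFunction, of_apply]
  linear_combination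
    (s ^ (i + k) * s ^ (j + k) * meixner (s ^ 2) i k * meixner (s ^ 2) j k) * hroot

end Meixner

section ExponentialSeries

lemma iteratedDeriv_tsum_mul_exp {ι : Type*} {c x : ι → ℝ} {a : ℝ} (hx : ∀ k, x k ≤ 0)
    (hc : ∀ m : ℕ, ∀ s, a < s → Summable fun k => c k * exp (x k * s) * x k ^ m) (m : ℕ) {s : ℝ}
    (hs : a < s) :
    iteratedDeriv m (fun y => ∑' k, c k * exp (x k * y)) s =
      ∑' k, c k * exp (x k * s) * x k ^ m := by
  induction m generalizing s with
  | zero => simp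
  | succ m ih =>
    have hloc : iteratedDeriv m (fun y => ∑' k, c k * exp (x k * y)) =ᶠ[𝓝 s]
        fun y => ∑' k, c k * exp (x k * y) * x k ^ m := by
      filter_upwards [Ioi_mem_nhds hs] with y hy using ih hy
    obtain ⟨b, hab, hbs⟩ := exists_between hs
    have hterm (k : ι) (y : ℝ) : HasDerivAt (fun y => c k * exp (x k * y) * x k ^ m)
        (c k * exp (x k * y) * x k ^ (m + 1)) y :=
      ((hasDerivAt_const_mul (x k)).exp.const_mul (c k)).mul_const (x k ^ m) |>.congr_deriv
        (by ring)
    have hbound (k : ι) (y : ℝ) (hy : y ∈ Set.Ioi b) :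
        ‖c k * exp (x k * y) * x k ^ (m + 1)‖ ≤ ‖c k * exp (x k * b) * x k ^ (m + 1)‖ := by
      simp only [norm_mul, norm_of_nonneg (exp_pos _).le]
      gcongr ‖c k‖ * exp ?_ * _
      exact mul_le_mul_of_nonpos_left (Set.mem_Ioi.1 hy).le (hx k)
    rw [iteratedDeriv_succ, hloc.deriv_eq]
    exact (hasDerivAt_tsum_of_isPreconnected (hc (m + 1) b hab).norm isOpen_Ioi isPreconnected_Ioi
      (fun k y _ => hterm k y) hbound hbs (hc m s hs) hbs).deriv

lemma hasSum_two_mul_exp_pow_succ {y : ℝ} (hy : 0 < y) :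
    HasSum (fun k : ℕ => 2 * exp (-2 * y) ^ (k + 1)) (cosh y / sinh y - 1) := by
  have hlt : exp (-2 * y) < 1 := exp_lt_one_iff.2 (by linarith)
  have h := (hasSum_geometric_of_lt_one (exp_pos _).le hlt).mul_left (2 * exp (-2 * y))
  have hvalue : 2 * exp (-2 * y) * (1 - exp (-2 * y))⁻¹ = cosh y / sinh y - 1 := by
    have hsq : exp (-2 * y) = exp (-y) ^ 2 := by
      rw [← exp_nat_mul]
      ring_nf
    have hinv : exp y * exp (-y) = 1 := by rw [← exp_add, add_neg_cancel, exp_zero]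
    rw [← div_eq_mul_inv, div_sub_one (sinh_pos_iff.2 hy).ne',
      div_eq_div_iff (sub_pos.2 hlt).ne' (sinh_pos_iff.2 hy).ne', cosh_sub_sinh, sinh_eq, hsq]
    linear_combination exp (-y) * hinv
  rw [← hvalue]
  exact h.congr_fun fun k => by ring

/-- The `k`-th term of the expansion of `phiSV γ t` in powers of `exp (-2 * t)`. -/
noncomputable def phiWeight (γ t : ℝ) (k : ℕ) : ℝ :=
  4 * sinh (2 * (k + 1) * γ) * exp (-2 * (k + 1) * t)

lemma phiWeight_eq_sub (γ t : ℝ) (k : ℕ) :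
    phiWeight γ t k = 2 * exp (-2 * (t - γ)) ^ (k + 1) - 2 * exp (-2 * (t + γ)) ^ (k + 1) := by
  have hadd : exp (-2 * (t - γ)) ^ (k + 1) = exp (2 * (k + 1) * γ) * exp (-2 * (k + 1) * t) := by
    rw [← exp_nat_mul, ← exp_add]
    push_cast
    ring_nf
  have hsub :
      exp (-2 * (t + γ)) ^ (k + 1) = exp (-(2 * (k + 1) * γ)) * exp (-2 * (k + 1) * t) := by
    rw [← exp_nat_mul, ← exp_add]
    push_cast
    ring_nf
  rw [phiWeight, hadd, hsub, sinh_eq]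
  ring

lemma phiWeight_eq_mul (γ t : ℝ) (k : ℕ) :
    phiWeight γ t k = 2 * (exp (γ - t) ^ 2) ^ (k + 1) * (1 - exp (-4 * γ) ^ (k + 1)) := by
  have hminus : exp (-2 * (t - γ)) = exp (γ - t) ^ 2 := by
    rw [← exp_nat_mul]
    ring_nf
  have hplus : exp (-2 * (t + γ)) = exp (γ - t) ^ 2 * exp (-4 * γ) := by
    rw [← hminus, ← exp_add]
    ring_nf
  rw [phiWeight_eq_sub, hplus, hminus, mul_pow]
  ring

variable {γ t : ℝ}

lemma hasSum_phiWeight (h : |γ| < t) : HasSum (phiWeight γ t) (phiSV γ t) := by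
  obtain ⟨hplus, hminus⟩ := abs_lt.1 h
  have hsinh_sub : sinh (t - γ) ≠ 0 := (sinh_pos_iff.2 (sub_pos.2 hminus)).ne'
  have hsinh_add : sinh (t + γ) ≠ 0 := (sinh_pos_iff.2 (by linarith)).ne'
  have hcoth : phiSV γ t = cosh (t - γ) / sinh (t - γ) - 1 - (cosh (t + γ) / sinh (t + γ) - 1) := by
    rw [phiSV, show 2 * γ = (t + γ) - (t - γ) by ring, sinh_sub]
    field_simp
    ring
  rw [hcoth, funext (phiWeight_eq_sub γ t)]
  exact (hasSum_two_mul_exp_pow_succ (by linarith)).sub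
    (hasSum_two_mul_exp_pow_succ (by linarith))

lemma summable_phiWeight_mul_eval (h : |γ| < t) (p : ℝ[X]) :
    Summable fun k => phiWeight γ t k * p.eval (k : ℝ) := by
  have hsum {y : ℝ} (hy : 0 < y) :
      Summable fun k : ℕ => 2 * exp (-2 * y) ^ (k + 1) * p.eval (k : ℝ) := by
    have hlt : ‖exp (-2 * y)‖ < 1 := by
      rw [norm_of_nonneg (exp_pos _).le]
      exact exp_lt_one_iff.2 (by linarith)
    exact ((summable_geometric_mul_eval hlt p).mul_left (2 * exp (-2 * y))).congr
      fun k => by ring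
  obtain ⟨hplus, hminus⟩ := abs_lt.1 h
  simp only [phiWeight_eq_sub, sub_mul]
  exact (hsum (by linarith)).sub (hsum (by linarith))

lemma summable_phiWeight_mul_pow (h : |γ| < t) (m : ℕ) :
    Summable fun k => phiWeight γ t k * (k : ℝ) ^ m := by
  simpa using summable_phiWeight_mul_eval h (X ^ m)

lemma iteratedDeriv_phiSV (h : |γ| < t) (m : ℕ) :
    iteratedDeriv m (phiSV γ) t = ∑' k : ℕ, phiWeight γ t k * (-2 * k + -2) ^ m := by
  let c (k : ℕ) : ℝ := 4 * sinh (2 * (k + 1) * γ)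
  let x (k : ℕ) : ℝ := -2 * k + -2
  have hweight (s : ℝ) (k : ℕ) : phiWeight γ s k = c k * exp (x k * s) := by
    simp only [phiWeight, c, x]
    ring_nf
  have hloc : phiSV γ =ᶠ[𝓝 t] fun s => ∑' k, c k * exp (x k * s) := by
    filter_upwards [Ioi_mem_nhds h] with s hs
    simp only [← (hasSum_phiWeight hs).tsum_eq, hweight]
  simp only [hloc.iteratedDeriv_eq, hweight]
  refine iteratedDeriv_tsum_mul_exp (fun k => by simp only [x]; linarith [k.cast_nonneg (α := ℝ)])
    (fun m s hs => ?_) m h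
  exact (summable_phiWeight_mul_eval hs ((C (-2) * X + C (-2)) ^ m)).congr fun k => by
    rw [hweight]
    simp [x]

lemma tauSV_eq_gramDet (h : |γ| < t) (n : ℕ) :
    tauSV n t γ =
      (∏ i ∈ range n, (-2) ^ i) ^ 2 * gramDet (phiWeight γ t) (.of fun i k => (k : ℝ) ^ i) n := by
  rw [← gramDet_affine_pow (summable_phiWeight_mul_pow h) (-2) (-2)]
  simp only [tauSV, gramDet, iteratedDeriv_phiSV h, of_apply, ← pow_add]

lemma gramDet_meixnerFunction (h : |γ| < t) (n : ℕ) :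
    gramDet (fun k => 1 - exp (-4 * γ) ^ (k + 1)) (meixnerFunction (exp (γ - t))) n =
      (sinh (t - γ) / exp (γ - t)) ^ n *
        ((∏ i ∈ range n, (-2 * sinh (t - γ)) ^ i / i.factorial) ^ 2 *
          gramDet (phiWeight γ t) (.of fun i k => (k : ℝ) ^ i) n) := by
  set s := exp (γ - t) with hs
  have hs₀ : s ≠ 0 := (exp_pos _).ne'
  have hs₁ : s < 1 := exp_lt_one_iff.2 (sub_neg.2 (abs_lt.1 h).2)
  have hsinh : sinh (t - γ) = (1 - s ^ 2) / (2 * s) := by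
    rw [sinh_eq, neg_sub, ← hs, ← neg_sub γ t, exp_neg, ← hs]
    field_simp
  have hroot : √(1 - s ^ 2) ^ 2 = 1 - s ^ 2 := sq_sqrt (by nlinarith [exp_pos (γ - t)])
  let P (i : ℕ) : ℝ[X] := C (s ^ i) * meixnerPolynomial (s ^ 2) i
  have hP (i : ℕ) : (P i).natDegree ≤ i :=
    (natDegree_C_mul_le _ _).trans (natDegree_meixnerPolynomial_le _ i)
  have hlead (i : ℕ) : (P i).coeff i = (-2 * sinh (t - γ)) ^ i / i.factorial := by
    rw [coeff_C_mul, coeff_meixnerPolynomial, mul_div_assoc', ← mul_pow, hsinh]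
    congr 2
    field_simp
    ring
  have hterm (i j k : ℕ) : (1 - exp (-4 * γ) ^ (k + 1)) *
      (meixnerFunction s i k * meixnerFunction s j k) =
        sinh (t - γ) / s * phiWeight γ t k * ((P i).eval (k : ℝ) * (P j).eval (k : ℝ)) := by
    simp only [P, eval_mul, eval_C, meixnerFunction, meixner, of_apply, phiWeight_eq_mul, ← hs,
      hsinh]
    field_simp
    rw [hroot]
    ring
  simp only [← hlead, ← gramDet_eval (summable_phiWeight_mul_pow h) hP, ← gramDet_const_mul]
  simp only [gramDet, of_apply, hterm]

lemma prod_pow_sq_mul_pow {M : Type*} [CommMonoid M] (x : M) (n : ℕ) :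
    (∏ i ∈ range n, x ^ i) ^ 2 * x ^ n = x ^ n ^ 2 := by
  rw [prod_pow_eq_pow_sum, ← pow_mul, ← pow_add, sum_range_id_mul_two,
    Nat.mul_sub_one, Nat.sub_add_cancel n.le_mul_self, ← sq]

lemma ZSV_div_eq_gramDet (h : |γ| < t) (n : ℕ) :
    ZSV n t γ / (sinh (t + γ) ^ n ^ 2 * exp (γ - t) ^ n) =
      gramDet (fun k => 1 - exp (-4 * γ) ^ (k + 1)) (meixnerFunction (exp (γ - t))) n := by
  have hsinh : sinh (t + γ) ≠ 0 := (sinh_pos_iff.2 (by linarith [neg_lt_of_abs_lt h])).ne'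
  have hfact : ∏ i ∈ range n, (i.factorial : ℝ) ≠ 0 := prod_ne_zero_iff.2 fun i _ => by positivity
  rw [gramDet_meixnerFunction h, ZSV, tauSV_eq_gramDet h, mul_pow,
    ← prod_pow_sq_mul_pow (sinh (t - γ))]
  simp only [mul_pow, prod_mul_distrib, prod_div_distrib, div_pow]
  field_simp

end ExponentialSeries

section Limit

variable {ρ : ℝ}

lemma summable_log_one_sub_pow_succ (hρ : ‖ρ‖ < 1) :
    Summable fun k : ℕ => log (1 - ρ ^ (k + 1)) := by
  have hgeom : Summable fun k : ℕ => -ρ ^ (k + 1) :=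
    ((summable_geometric_of_norm_lt_one hρ).comp_injective (add_left_injective 1)).neg
  simpa only [sub_eq_add_neg] using summable_log_one_add_of_summable hgeom

lemma one_sub_pow_succ_pos (hρ₀ : 0 ≤ ρ) (hρ₁ : ρ < 1) (k : ℕ) : 0 < 1 - ρ ^ (k + 1) :=
  sub_pos.2 (pow_lt_one₀ hρ₀ hρ₁ k.succ_ne_zero)

lemma tprod_one_sub_pow_succ_pos (hρ₀ : 0 ≤ ρ) (hρ₁ : ρ < 1) : 0 < ∏' k : ℕ, (1 - ρ ^ (k + 1)) := by
  rw [← rexp_tsum_eq_tprod (one_sub_pow_succ_pos hρ₀ hρ₁)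
    (summable_log_one_sub_pow_succ (by rwa [norm_of_nonneg hρ₀]))]
  exact exp_pos _

theorem tendsto_gramDet_meixnerFunction (hρ₀ : 0 ≤ ρ) (hρ₁ : ρ < 1) {s : ℝ} (hs₀ : s ≠ 0)
    (hs : ‖s‖ < 1) :
    Tendsto (gramDet (fun k => 1 - ρ ^ (k + 1)) (meixnerFunction s)) atTop
      (𝓝 (∏' k : ℕ, (1 - ρ ^ (k + 1)))) := by
  have hgram := hasGram_meixnerFunction hs₀ hs
  have hprod := multipliable_of_summable_log (one_sub_pow_succ_pos hρ₀ hρ₁)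
    (summable_log_one_sub_pow_succ (by rwa [norm_of_nonneg hρ₀]))
  exact tendsto_gramDet_of_orthogonal hgram (by rwa [meixnerFunction_transpose])
    (fun k => (one_sub_pow_succ_pos hρ₀ hρ₁ k).le)
    (fun k => sub_le_self 1 (pow_nonneg hρ₀ _)) hprod.hasProd.tendsto_prod_nat

theorem tendsto_ZSV_div {γ t : ℝ} (hγ : 0 < γ) (h : γ < t) :
    Tendsto (fun n => ZSV n t γ / (sinh (t + γ) ^ n ^ 2 * exp (γ - t) ^ n)) atTop
      (𝓝 (∏' k : ℕ, (1 - exp (-4 * γ) ^ (k + 1)))) := by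
  have hs : ‖exp (γ - t)‖ < 1 := by
    rw [norm_of_nonneg (exp_pos _).le]
    exact exp_lt_one_iff.2 (sub_neg.2 h)
  simp only [ZSV_div_eq_gramDet (abs_lt.2 ⟨by linarith, h⟩)]
  exact tendsto_gramDet_meixnerFunction (exp_pos _).le (exp_lt_one_iff.2 (by linarith))
    (exp_pos _).ne' hs

end Limit

/-- For every `γ > 0` there exist `d₀(γ), d₁(γ)` such that for every `t > γ` the limit
`C(γ,t) = lim_{n→∞} Z_n/(F^{n²} G^n)` exists, is positive, and
`ln C(γ,t) = d₁(γ) t + d₀(γ)`; i.e., `t ↦ ln C(γ,t)` is affine on `(γ,∞)`. -/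
theorem log_C_affine_in_t
    (γ : ℝ) (hγ : 0 < γ) :
    ∃ d₀ d₁ : ℝ, ∀ t : ℝ, γ < t →
      ∃ C : ℝ, 0 < C ∧
        Filter.Tendsto
          (fun n : ℕ => ZSV n t γ / (Real.sinh (t + γ) ^ (n ^ 2) * Real.exp (γ - t) ^ n))
          Filter.atTop (nhds C) ∧
        Real.log C = d₁ * t + d₀ := by
  have hpos : 0 < ∏' k : ℕ, (1 - exp (-4 * γ) ^ (k + 1)) :=
    tprod_one_sub_pow_succ_pos (exp_pos _).le (exp_lt_one_iff.2 (by linarith))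
  exact ⟨log (∏' k : ℕ, (1 - exp (-4 * γ) ^ (k + 1))), 0, fun t ht =>
    ⟨_, hpos, tendsto_ZSV_div hγ ht, by rw [zero_mul, zero_add]⟩⟩
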